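/- For all integers k, n with 0 < n < k and every complex number α with Re α > 0, the identity ∑_{k₁+⋯+kₙ = k, kᵢ ∈ ℤ_{≥1}, kₙ ≥ 2} ζ(k₁,…,kₙ; α) = (1/(k−n−1)!) · ∑_{l=0}^∞ (1/(l+1)^n) · (∂^{k−n−1}/∂X^{k−n−1}) [ (1−X)_l / (α−X)_{l+1} ] evaluated at X = 0, where the sum on the left is over all n-tuples of positive integers (k₁,…,kₙ) with k₁+⋯+kₙ = k and kₙ ≥ 2. -/

import Mathlib

/-!
Put `a = α - X`. By geometric series, the numbers `∑_κ ζ(κ; α)` over the admissible exponents of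
weight `n + 1 + j` are the Taylor coefficients, in degree `j`, of
`G(X) = ∑_{m₁ < ⋯ < mₙ} (∏ 1 / (mᵢ + a)) / (mₙ + α)`. So it suffices to prove
`G(X) = ∑_l (1 - X)_l / ((l + 1)ⁿ (a)_{l+1})` near `X = 0`, in a way that allows termwise
differentiation.

This is a connected-sum argument. The telescoping series `∑_l (c)_l / (b)_{l+1} = 1 / (b - c)`
(`hasSum_binomial_complex`) with `c = 1 - X`, `b = mₙ + 1 + a` expands `1 / (mₙ + α)` as
`∑_l (1 - X)_l / (mₙ + 1 + a)_{l+1}`. The connector `1 / (m + 1 + a)_L` satisfies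
`∑_{m ≥ M} (1 / (m + a)) / (m + 1 + a)_L = (1 / L) / (M + a)_L`, again by telescoping
(`hasSum_transport_complex`), so summing out the `mᵢ` gives `L⁻ⁿ / (a)_L`
(`hasSum_connTerm_complex`).

On the disc `|X| < Re α / 4` the double series over `l` and `(mᵢ)` is dominated termwise by the
same double series for the positive real parameters `3 Re α / 4` and `1 + Re α / 4`, which converges
(`summable_double_real`). Hence both orders of summation may be differentiated term by term at
`X = 0` (`hasSum_iteratedDeriv_of_bounded`) and they agree (`tsum_iteratedDeriv_comm`).
-/

open scoped BigOperators

/-- The Pochhammer symbol `(a)_m = a (a+1) ⋯ (a+m-1)`, with `(a)_0 = 1`. -/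
noncomputable def poch (a : ℂ) (m : ℕ) : ℂ := ∏ i ∈ Finset.range m, (a + i)

/-- The multiple Hurwitz zeta value
`ζ(s₁,…,sₙ;α) = ∑_{0≤m₁<⋯<mₙ} 1/((m₁+α)^{s₁} ⋯ (mₙ+α)^{sₙ})`. -/
noncomputable def mhzeta {n : ℕ} (s : Fin n → ℕ) (α : ℂ) : ℂ :=
  ∑' t : {t : Fin n → ℕ // StrictMono t}, ∏ i, 1 / (((t.1 i : ℂ) + α) ^ (s i))

/-! ### Taylor coefficients -/

/-- Termwise differentiation of all orders for a normally convergent series of holomorphic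
functions on a disc. -/
lemma hasSum_iteratedDeriv_of_bounded {ι : Type*} (j : ℕ) :
    ∀ (F : ι → ℂ → ℂ) (u : ι → ℝ) (r : ℝ), 0 < r → Summable u →
      (∀ i, DifferentiableOn ℂ (F i) (Metric.ball 0 r)) →
      (∀ i, ∀ w ∈ Metric.ball (0 : ℂ) r, ‖F i w‖ ≤ u i) →
      HasSum (fun i => iteratedDeriv j (F i) 0) (iteratedDeriv j (fun w => ∑' i, F i w) 0) := by
  induction j with
  | zero =>
    intro F u r hr hu hF hle
    simp only [iteratedDeriv_zero]
    exact (hu.of_norm_bounded fun i => hle i 0 (Metric.mem_ball_self hr)).hasSum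
  | succ j ih =>
    intro F u r hr hu hF hle
    -- Cauchy's estimate bounds the derivatives on the disc of half the radius.
    have key := ih (fun i => deriv (F i)) (fun i => u i / (r / 4)) (r / 2) (by positivity)
      (hu.div_const _)
      (fun i => ((hF i).deriv Metric.isOpen_ball).mono (Metric.ball_subset_ball (by linarith)))
      (fun i w hw => by
        have hsub : Metric.closedBall w (r / 4) ⊆ Metric.ball 0 r := by
          apply Metric.closedBall_subset_ball'
          rw [Metric.mem_ball] at hw
          linarith
        apply Complex.norm_deriv_le_of_forall_mem_sphere_norm_le (by positivity)
        · apply DifferentiableOn.diffContOnCl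
          exact (hF i).mono ((Metric.closure_ball_subset_closedBall).trans hsub)
        · intro z hz
          exact hle i z (hsub (Metric.sphere_subset_closedBall hz)))
    simp only [iteratedDeriv_succ']
    convert! key using 1
    apply Filter.EventuallyEq.iteratedDeriv_eq
    filter_upwards [Metric.ball_mem_nhds (0 : ℂ) hr] with w hw
    exact (Complex.hasSum_deriv_of_summable_norm hu hF Metric.isOpen_ball hle hw).tsum_eq.symm

/-- The Taylor series at `0` of a complex function, as a formal power series. -/
noncomputable def taylorPS (f : ℂ → ℂ) : PowerSeries ℂ :=
  PowerSeries.mk fun j => iteratedDeriv j f 0 / (j.factorial : ℂ)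

lemma taylorPS_mul {f g : ℂ → ℂ} (hf : AnalyticAt ℂ f 0) (hg : AnalyticAt ℂ g 0) :
    taylorPS (fun X => f X * g X) = taylorPS f * taylorPS g := by
  ext j
  rw [PowerSeries.coeff_mul, Finset.Nat.sum_antidiagonal_eq_sum_range_succ_mk]
  simp only [taylorPS, PowerSeries.coeff_mk]
  rw [iteratedDeriv_fun_mul hf.contDiffAt hg.contDiffAt, Finset.sum_div]
  refine Finset.sum_congr rfl fun i hi => ?_
  have hij : i ≤ j := by simpa [Nat.lt_succ_iff] using hi
  rw [Nat.cast_choose ℂ hij]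
  have h1 : (j.factorial : ℂ) ≠ 0 := by exact_mod_cast j.factorial_ne_zero
  have h2 : (i.factorial : ℂ) ≠ 0 := by exact_mod_cast i.factorial_ne_zero
  have h3 : ((j - i).factorial : ℂ) ≠ 0 := by exact_mod_cast (j - i).factorial_ne_zero
  field_simp

lemma taylorPS_const (c : ℂ) : taylorPS (fun _ => c) = PowerSeries.C c := by
  ext j
  rcases j with _ | j <;> simp [taylorPS, iteratedDeriv_const, PowerSeries.coeff_C]

lemma taylorPS_const_sub (c : ℂ) :
    taylorPS (fun X => c - X) = PowerSeries.C c - PowerSeries.X := by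
  ext j
  have hd : deriv (fun X : ℂ => c - X) = fun _ => -1 := by
    ext x; simp
  rcases j with _ | _ | j
  · simp [taylorPS]
  · simp [taylorPS]
  · simp [taylorPS, iteratedDeriv_succ', hd, PowerSeries.coeff_X]

lemma coeff_taylorPS_inv {c : ℂ} (hc : c ≠ 0) (j : ℕ) :
    PowerSeries.coeff j (taylorPS (fun X => 1 / (c - X))) = 1 / c ^ (j + 1) := by
  have h0 : c - 0 ≠ 0 := by simpa using hc
  have hA : AnalyticAt ℂ (fun X : ℂ => c - X) 0 := analyticAt_const.sub analyticAt_id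
  have hB : AnalyticAt ℂ (fun X : ℂ => 1 / (c - X)) 0 := analyticAt_const.div hA h0
  have h1 : taylorPS (fun X => 1 / (c - X)) * (PowerSeries.C c - PowerSeries.X) = 1 := by
    rw [← taylorPS_const_sub, ← taylorPS_mul hB hA, ← map_one PowerSeries.C, ← taylorPS_const]
    ext j
    simp only [taylorPS, PowerSeries.coeff_mk]
    congr 1
    apply Filter.EventuallyEq.iteratedDeriv_eq
    filter_upwards [hA.continuousAt.eventually_ne h0] with X hX
    field_simp
  have h2 := PowerSeries.invUnitsSub_mul_sub (Units.mk0 c hc)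
  have h3 : taylorPS (fun X => 1 / (c - X)) = PowerSeries.invUnitsSub (Units.mk0 c hc) := by
    have h4 : (PowerSeries.C c - PowerSeries.X : PowerSeries ℂ) ≠ 0 := by
      intro h; simp [h] at h1
    exact mul_right_cancel₀ h4 (h1.trans h2.symm)
  rw [h3]
  simp [divp]

lemma taylorPS_prod {ι : Type*} (s : Finset ι) (f : ι → ℂ → ℂ)
    (hf : ∀ i ∈ s, AnalyticAt ℂ (f i) 0) :
    taylorPS (fun X => ∏ i ∈ s, f i X) = ∏ i ∈ s, taylorPS (f i) := by
  classical
  induction s using Finset.induction_on with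
  | empty => simp [taylorPS_const]
  | insert i s hi ih =>
    simp only [Finset.prod_insert hi]
    rw [taylorPS_mul (hf i (by simp)), ih fun j hj => hf j (by simp [hj])]
    exact Finset.analyticAt_fun_prod _ fun j hj => hf j (by simp [hj])

/-- The Taylor coefficients of `∏ 1 / (c i - X)` are the complete homogeneous symmetric
polynomials in the `1 / c i`, up to the factor `∏ 1 / c i`. -/
lemma iteratedDeriv_prod_inv {n : ℕ} (c : Fin n → ℂ) (hc : ∀ i, c i ≠ 0) (j : ℕ) :
    iteratedDeriv j (fun X => ∏ i, 1 / (c i - X)) 0 / (j.factorial : ℂ)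
      = ∑ p ∈ Finset.finsuppAntidiag Finset.univ j, ∏ i, 1 / c i ^ (p i + 1) := by
  have h := congrArg (PowerSeries.coeff j) (taylorPS_prod Finset.univ
    (fun i X => 1 / (c i - X)) (fun i _ => analyticAt_const.div
      (analyticAt_const.sub analyticAt_id) (by simpa using hc i)))
  rw [PowerSeries.coeff_prod] at h
  simp only [coeff_taylorPS_inv (hc _)] at h
  rw [← h, taylorPS, PowerSeries.coeff_mk]

/-! ### Pochhammer symbols -/

/-- The Pochhammer symbol over `ℝ` or `ℂ`; over `ℂ` it is `poch` by definition. -/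
noncomputable def pochK {K : Type*} [RCLike K] (a : K) (m : ℕ) : K :=
  ∏ i ∈ Finset.range m, (a + (i : K))

lemma pochK_succ {K : Type*} [RCLike K] (a : K) (m : ℕ) :
    pochK a (m + 1) = pochK a m * (a + m) := by
  simp [pochK, Finset.prod_range_succ]

lemma pochK_succ' {K : Type*} [RCLike K] (a : K) (m : ℕ) :
    pochK a (m + 1) = a * pochK (a + 1) m := by
  simp only [pochK]
  rw [Finset.prod_range_succ', mul_comm]
  simp only [Nat.cast_zero, add_zero, Nat.cast_add, Nat.cast_one]
  congr 1
  exact Finset.prod_congr rfl fun i _ => by ring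

lemma natCast_add_ne_zero {K : Type*} [RCLike K] {a : K} (ha : 0 < RCLike.re a) (m : ℕ) :
    a + (m : K) ≠ 0 := by
  intro h
  have := congrArg RCLike.re h
  have hm : (0 : ℝ) ≤ m := m.cast_nonneg
  simp at this
  linarith

lemma pochK_ne_zero {K : Type*} [RCLike K] {a : K} (ha : 0 < RCLike.re a) (m : ℕ) :
    pochK a m ≠ 0 :=
  Finset.prod_ne_zero_iff.2 fun i _ => natCast_add_ne_zero ha i

lemma pochK_pos {a : ℝ} (ha : 0 < a) (m : ℕ) : 0 < pochK a m :=
  Finset.prod_pos fun i _ => by positivity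

lemma norm_poch_le {z : ℂ} {y : ℝ} (h : ‖z‖ ≤ y) (m : ℕ) : ‖poch z m‖ ≤ pochK y m := by
  rw [poch, norm_prod]
  refine Finset.prod_le_prod (fun _ _ => norm_nonneg _) fun i _ => ?_
  refine (norm_add_le _ _).trans ?_
  simpa using h

lemma le_norm_add_natCast {z : ℂ} {x : ℝ} (h : x ≤ z.re) (m : ℕ) : x + m ≤ ‖z + m‖ := by
  refine le_trans ?_ (Complex.re_le_norm _)
  simpa using h

lemma norm_inv_poch_le {z : ℂ} {x : ℝ} (hx : 0 < x) (h : x ≤ z.re) (m : ℕ) :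
    ‖1 / poch z m‖ ≤ 1 / pochK x m := by
  rw [norm_div, norm_one]
  refine one_div_le_one_div_of_le (pochK_pos hx m) ?_
  rw [poch, norm_prod]
  exact Finset.prod_le_prod (fun i _ => by positivity)
    fun i _ => by simpa using le_norm_add_natCast h i

/-! ### The transport relation -/

/-- The connector `1 / (a + m)_L` has differences in `m` equal to `L / (m + a)` times itself; this
is what trades a factor `1 / (m + a)` for a factor `1 / L`. -/
lemma transport_telescope {K : Type*} [RCLike K] {a : K} (ha : 0 < RCLike.re a) {L : ℕ}
    (hL : 1 ≤ L) (m : ℕ) :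
    1 / ((m : K) + a) * (1 / pochK (a + ((m + 1 : ℕ) : K)) L)
      = 1 / (L : K) * (1 / pochK (a + (m : K)) L)
        - 1 / (L : K) * (1 / pochK (a + ((m + 1 : ℕ) : K)) L) := by
  have hx : 0 < RCLike.re (a + (m : K)) := by
    have hm : (0 : ℝ) ≤ m := m.cast_nonneg
    simp; linarith
  have hx1 : 0 < RCLike.re (a + ((m + 1 : ℕ) : K)) := by
    have hm : (0 : ℝ) ≤ m := m.cast_nonneg
    simp; linarith
  have e : (a + (m : K)) * pochK (a + ((m + 1 : ℕ) : K)) L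
      = pochK (a + (m : K)) L * (a + m + L) := by
    rw [← pochK_succ, pochK_succ']
    push_cast
    ring_nf
  have h1 := pochK_ne_zero hx L
  have h2 := pochK_ne_zero hx1 L
  have h3 : a + (m : K) ≠ 0 := natCast_add_ne_zero ha m
  have h4 : (L : K) ≠ 0 := by exact_mod_cast (by omega : L ≠ 0)
  rw [add_comm (m : K) a]
  generalize pochK (a + ((m + 1 : ℕ) : K)) L = P at *
  generalize pochK (a + (m : K)) L = Q at *
  field_simp
  linear_combination (-1 : K) * e

lemma tendsto_inv_pochK {K : Type*} [RCLike K] (a : K) {L : ℕ} (hL : 1 ≤ L) :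
    Filter.Tendsto (fun m : ℕ => 1 / pochK (a + (m : K)) L) Filter.atTop (nhds 0) := by
  have h : ∀ i ∈ Finset.range L,
      Filter.Tendsto (fun m : ℕ => (a + (m : K) + (i : K))⁻¹) Filter.atTop (nhds 0) := by
    intro i _
    apply Filter.tendsto_inv₀_cobounded.comp
    have h0 : Filter.Tendsto (fun m : ℕ => (m : K)) Filter.atTop (Bornology.cobounded K) := by
      rw [← tendsto_norm_atTop_iff_cobounded]
      simpa using tendsto_natCast_atTop_atTop (R := ℝ)
    have := (tendsto_add_const_cobounded (a + (i : K))).comp h0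
    refine this.congr fun m => ?_
    simp only [Function.comp]; ring
  have := tendsto_finsetProd _ h
  rw [Finset.prod_const, Finset.card_range, zero_pow (by omega)] at this
  simpa [pochK] using this

lemma hasSum_transport_real {a : ℝ} (ha : 0 < a) {L : ℕ} (hL : 1 ≤ L) :
    HasSum (fun m : ℕ => 1 / ((m : ℝ) + a) * (1 / pochK (a + ((m + 1 : ℕ) : ℝ)) L))
      (1 / (L : ℝ) * (1 / pochK a L)) := by
  rw [hasSum_iff_tendsto_nat_of_nonneg]
  · simp only [transport_telescope (K := ℝ) (a := a) (by simpa using ha) hL]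
    simp only [Finset.sum_range_sub' (fun m : ℕ => 1 / (L : ℝ) * (1 / pochK (a + (m : ℝ)) L))]
    simpa using (((tendsto_inv_pochK a hL).const_mul (1 / (L : ℝ))).const_sub
      (1 / (L : ℝ) * (1 / pochK (a + ((0 : ℕ) : ℝ)) L)))
  · intro m
    have := pochK_pos (a := a + ((m + 1 : ℕ) : ℝ)) (by positivity) L
    positivity

lemma hasSum_transport_complex {a : ℂ} (ha : 0 < a.re) {L : ℕ} (hL : 1 ≤ L) :
    HasSum (fun m : ℕ => 1 / ((m : ℂ) + a) * (1 / pochK (a + ((m + 1 : ℕ) : ℂ)) L))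
      (1 / (L : ℂ) * (1 / pochK a L)) := by
  have hs : Summable
      (fun m : ℕ => 1 / ((m : ℂ) + a) * (1 / pochK (a + ((m + 1 : ℕ) : ℂ)) L)) := by
    refine (hasSum_transport_real ha hL).summable.of_norm_bounded fun m => ?_
    rw [norm_mul]
    refine mul_le_mul ?_ (norm_inv_poch_le (by positivity) (by simp) L) (norm_nonneg _)
      (by positivity)
    rw [norm_div, norm_one, add_comm (m : ℂ), add_comm (m : ℝ)]
    exact one_div_le_one_div_of_le (by positivity) (le_norm_add_natCast le_rfl m)
  refine (hs.hasSum_iff_tendsto_nat).2 ?_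
  simp only [transport_telescope (K := ℂ) (a := a) (by simpa using ha) hL]
  simp only [Finset.sum_range_sub' (fun m : ℕ => 1 / (L : ℂ) * (1 / pochK (a + (m : ℂ)) L))]
  simpa using (((tendsto_inv_pochK a hL).const_mul (1 / (L : ℂ))).const_sub
      (1 / (L : ℂ) * (1 / pochK (a + ((0 : ℕ) : ℂ)) L)))

/-! ### Sums over increasing tuples -/

/-- Strictly increasing `n`-tuples of natural numbers. -/
abbrev Tup (n : ℕ) := {t : Fin n → ℕ // StrictMono t}

/-- One more than the largest entry of a tuple, and `0` for the empty tuple. -/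
def topSucc {n : ℕ} (t : Tup n) : ℕ := Finset.univ.sup fun i => t.1 i + 1

/-- A strictly increasing tuple is the same as its smallest entry `m` together with the strictly
increasing tuple obtained by subtracting `m + 1` from the other entries. -/
def consTup (n : ℕ) : ℕ × Tup n ≃ Tup (n + 1) where
  toFun p := ⟨Fin.cons p.1 fun i => p.2.1 i + (p.1 + 1), by
    intro i j hij
    induction i using Fin.cases with
    | zero =>
      induction j using Fin.cases with
      | zero => simp at hij
      | succ j => simp only [Fin.cons_zero, Fin.cons_succ]; omega
    | succ i =>
      induction j using Fin.cases with
      | zero => simp at hij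
      | succ j =>
        simp only [Fin.cons_succ]
        have := p.2.2 (Fin.succ_lt_succ_iff.1 hij)
        omega⟩
  invFun t := (t.1 0, ⟨fun i => t.1 i.succ - (t.1 0 + 1), by
    intro i j hij
    have h1 := t.2 (Fin.succ_pos i)
    have h2 := t.2 (Fin.succ_lt_succ_iff.2 hij)
    simp only
    omega⟩)
  left_inv p := by
    ext <;> simp
  right_inv t := by
    ext i
    induction i using Fin.cases with
    | zero => simp
    | succ i =>
      have h1 := t.2 (Fin.succ_pos i)
      simp only [Fin.cons_succ]
      omega

lemma topSucc_consTup {n : ℕ} (m : ℕ) (t : Tup n) :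
    topSucc (consTup n (m, t)) = (m + 1) + topSucc t := by
  simp only [topSucc, consTup, Equiv.coe_fn_mk]
  rw [Fin.univ_succ, Finset.sup_cons, Finset.sup_map]
  simp only [Fin.cons_zero, Function.comp_def, Function.Embedding.coeFn_mk, Fin.cons_succ]
  apply le_antisymm
  · refine sup_le (by omega) (Finset.sup_le fun i _ => ?_)
    have : t.1 i + 1 ≤ Finset.univ.sup fun i => t.1 i + 1 :=
      Finset.le_sup (f := fun i => t.1 i + 1) (Finset.mem_univ i)
    omega
  · rcases Nat.eq_zero_or_pos n with rfl | hn
    · simp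
    · have : Nonempty (Fin n) := ⟨⟨0, hn⟩⟩
      obtain ⟨i, _, hi⟩ := Finset.exists_mem_eq_sup Finset.univ Finset.univ_nonempty
        (fun i => t.1 i + 1)
      rw [hi]
      refine le_trans ?_ le_sup_right
      refine le_trans ?_ (Finset.le_sup (Finset.mem_univ i))
      omega

lemma topSucc_succ {n : ℕ} (t : Tup (n + 1)) : topSucc t = t.1 (Fin.last n) + 1 := by
  apply le_antisymm
  · exact Finset.sup_le fun i _ => Nat.succ_le_succ (t.2.monotone (Fin.le_last i))
  · exact Finset.le_sup (f := fun i => t.1 i + 1) (Finset.mem_univ _)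

/-- The summand of the connected sum: `∏ 1 / (tᵢ + a)` times the connector
`1 / (a + tₙ + 1)_L`. -/
noncomputable def connTerm {K : Type*} [RCLike K] {n : ℕ} (a : K) (L : ℕ) (t : Tup n) : K :=
  (∏ i, 1 / ((t.1 i : K) + a)) * (1 / pochK (a + (topSucc t : K)) L)

lemma connTerm_consTup {K : Type*} [RCLike K] {n : ℕ} (a : K) (L m : ℕ) (t : Tup n) :
    connTerm a L (consTup n (m, t))
      = 1 / ((m : K) + a) * connTerm (a + ((m + 1 : ℕ) : K)) L t := by
  simp only [connTerm, topSucc_consTup]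
  rw [Fin.prod_univ_succ]
  simp only [consTup, Equiv.coe_fn_mk, Fin.cons_zero, Fin.cons_succ]
  rw [mul_assoc]
  congr 2
  · refine Finset.prod_congr rfl fun i _ => ?_
    push_cast
    ring_nf
  · push_cast
    ring_nf

lemma connTerm_nonneg {n : ℕ} {a : ℝ} (ha : 0 < a) (L : ℕ) (t : Tup n) :
    0 ≤ connTerm a L t := by
  have := pochK_pos (a := a + (topSucc t : ℝ)) (by positivity) L
  unfold connTerm
  have : ∀ i, 0 ≤ 1 / ((t.1 i : ℝ) + a) := fun i => by positivity
  have := Finset.prod_nonneg fun i (_ : i ∈ Finset.univ) => this i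
  positivity

lemma norm_connTerm_le {n : ℕ} {a : ℂ} {x : ℝ} (hx : 0 < x) (hxa : x ≤ a.re) (L : ℕ)
    (t : Tup n) : ‖connTerm a L t‖ ≤ connTerm x L t := by
  unfold connTerm
  rw [norm_mul, norm_prod]
  have hp : ∀ i, ‖1 / ((t.1 i : ℂ) + a)‖ ≤ 1 / ((t.1 i : ℝ) + x) := fun i => by
    rw [norm_div, norm_one, add_comm _ a, add_comm _ x]
    exact one_div_le_one_div_of_le (by positivity) (le_norm_add_natCast hxa _)
  refine mul_le_mul (Finset.prod_le_prod (fun _ _ => norm_nonneg _) fun i _ => hp i)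
    (norm_inv_poch_le (by positivity) (by simpa using hxa) L) (norm_nonneg _)
    (Finset.prod_nonneg fun i _ => by positivity)

/-- The connected sum: summing out the largest index replaces `1 / (tᵢ + a)` by `1 / L`, so the
whole sum is `L⁻ⁿ / (a)_L`. The induction peels off the smallest index instead, shifting `a`. -/
lemma hasSum_connTerm_real {L : ℕ} (hL : 1 ≤ L) (n : ℕ) : ∀ {a : ℝ}, 0 < a →
    HasSum (fun t : Tup n => connTerm a L t) (1 / (L : ℝ) ^ n * (1 / pochK a L)) := by
  induction n with
  | zero =>
    intro a ha
    have : Unique (Tup 0) := ⟨⟨⟨Fin.elim0, fun i => i.elim0⟩⟩, fun t => Subsingleton.elim _ _⟩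
    convert! hasSum_unique (fun t : Tup 0 => connTerm a L t) using 1
    simp [connTerm, topSucc]
  | succ n ih =>
    intro a ha
    rw [← (consTup n).hasSum_iff]
    have hin : ∀ m : ℕ, HasSum (fun t : Tup n => connTerm a L (consTup n (m, t)))
        (1 / (L : ℝ) ^ n * (1 / ((m : ℝ) + a) * (1 / pochK (a + ((m + 1 : ℕ) : ℝ)) L))) := by
      intro m
      simp only [connTerm_consTup]
      convert! (ih (a := a + ((m + 1 : ℕ) : ℝ)) (by positivity)).mul_left (1 / ((m : ℝ) + a))
        using 1
      ring
    have hout := (hasSum_transport_real ha hL).mul_left (1 / (L : ℝ) ^ n)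
    have hs : Summable ((fun t => connTerm a L t) ∘ (consTup n)) := by
      refine (summable_prod_of_nonneg (fun p => connTerm_nonneg ha L (consTup n p))).2 ⟨fun m => (hin m).summable, ?_⟩
      refine hout.summable.congr fun m => ?_
      exact (hin m).tsum_eq.symm
    have := (hs.hasSum.prod_fiberwise hin).unique hout
    convert! hs.hasSum using 1
    rw [this]
    ring

/-- The complex form of `hasSum_connTerm_real`, which supplies the absolute convergence. -/
lemma hasSum_connTerm_complex {L : ℕ} (hL : 1 ≤ L) (n : ℕ) : ∀ {a : ℂ}, 0 < a.re →
    HasSum (fun t : Tup n => connTerm a L t) (1 / (L : ℂ) ^ n * (1 / pochK a L)) := by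
  induction n with
  | zero =>
    intro a ha
    have : Unique (Tup 0) := ⟨⟨⟨Fin.elim0, fun i => i.elim0⟩⟩, fun t => Subsingleton.elim _ _⟩
    convert! hasSum_unique (fun t : Tup 0 => connTerm a L t) using 1
    simp [connTerm, topSucc]
  | succ n ih =>
    intro a ha
    have hs : Summable ((fun t => connTerm a L t) ∘ (consTup n)) := by
      rw [(consTup n).summable_iff]
      exact (hasSum_connTerm_real hL (n + 1) ha).summable.of_norm_bounded
        fun t => norm_connTerm_le ha le_rfl L t
    rw [← (consTup n).hasSum_iff]
    have hin : ∀ m : ℕ, HasSum (fun t : Tup n => connTerm a L (consTup n (m, t)))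
        (1 / (L : ℂ) ^ n * (1 / ((m : ℂ) + a) * (1 / pochK (a + ((m + 1 : ℕ) : ℂ)) L))) := by
      intro m
      simp only [connTerm_consTup]
      have hm : (0 : ℝ) ≤ m := m.cast_nonneg
      convert! (ih (a := a + ((m + 1 : ℕ) : ℂ)) (by simp; linarith)).mul_left
        (1 / ((m : ℂ) + a)) using 1
      ring
    have hout := (hasSum_transport_complex ha hL).mul_left (1 / (L : ℂ) ^ n)
    have := (hs.hasSum.prod_fiberwise hin).unique hout
    convert! hs.hasSum using 1
    rw [this]
    ring

/-! ### The binomial-type series -/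

lemma binomial_telescope {K : Type*} [RCLike K] {b : K} (hb : 0 < RCLike.re b) (c : K) (l : ℕ) :
    (b - c) * (pochK c l * (1 / pochK b (l + 1)))
      = pochK c l / pochK b l - pochK c (l + 1) / pochK b (l + 1) := by
  have h1 := pochK_ne_zero hb l
  have h2 := natCast_add_ne_zero hb l
  rw [pochK_succ, pochK_succ]
  field_simp
  ring

lemma summable_binomial_real {b c : ℝ} (hc : 0 < c) (hcb : c < b) :
    Summable fun l : ℕ => pochK c l * (1 / pochK b (l + 1)) := by
  have hb : 0 < b := hc.trans hcb
  refine summable_of_sum_range_le (c := 1 / (b - c)) (fun l => ?_) fun M => ?_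
  · have := pochK_pos hc l
    have := pochK_pos hb (l + 1)
    positivity
  · have h0 : 0 < b - c := sub_pos.2 hcb
    rw [le_div_iff₀ h0, mul_comm, Finset.mul_sum]
    simp only [binomial_telescope (K := ℝ) (b := b) (by simpa using hb) c]
    rw [Finset.sum_range_sub' (fun l => pochK c l / pochK b l)]
    have := pochK_pos hc M
    have := pochK_pos hb M
    have : 0 ≤ pochK c M / pochK b M := by positivity
    simp [pochK] at this ⊢
    linarith

/-- The ratio `(c)_l / (b)_l` decreases, and a positive limit would make
`∑ (c)_l / (b)_{l+1}` dominate a multiple of the harmonic series. -/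
lemma tendsto_ratio_real {b c : ℝ} (hc : 0 < c) (hcb : c < b) :
    Filter.Tendsto (fun l : ℕ => pochK c l / pochK b l) Filter.atTop (nhds 0) := by
  have hb : 0 < b := hc.trans hcb
  have hpos : ∀ l : ℕ, 0 ≤ pochK c l / pochK b l := fun l =>
    div_nonneg (pochK_pos hc l).le (pochK_pos hb l).le
  have hanti : Antitone fun l : ℕ => pochK c l / pochK b l := by
    refine antitone_nat_of_succ_le fun l => ?_
    have h := binomial_telescope (K := ℝ) (b := b) (by simpa using hb) c l
    have := pochK_pos hc l
    have := pochK_pos hb (l + 1)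
    have : 0 ≤ (b - c) * (pochK c l * (1 / pochK b (l + 1))) :=
      mul_nonneg (sub_pos.2 hcb).le (by positivity)
    linarith
  have hbdd : BddBelow (Set.range fun l : ℕ => pochK c l / pochK b l) :=
    ⟨0, by rintro _ ⟨l, rfl⟩; exact hpos l⟩
  have hlim := tendsto_atTop_ciInf hanti hbdd
  set ℓ := ⨅ l : ℕ, pochK c l / pochK b l with hℓ
  have hℓ0 : 0 ≤ ℓ := le_ciInf hpos
  rcases hℓ0.eq_or_lt with h | h
  · rwa [← h] at hlim
  · exfalso
    have hs : Summable fun l : ℕ => ℓ * (1 / (b + (l : ℝ))) := by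
      refine Summable.of_nonneg_of_le (fun l => by positivity) (fun l => ?_)
        (summable_binomial_real hc hcb)
      have h1 : ℓ ≤ pochK c l / pochK b l := ciInf_le hbdd l
      have h2 : 0 < b + (l : ℝ) := by positivity
      have h3 := pochK_pos hb l
      calc ℓ * (1 / (b + (l : ℝ))) ≤ pochK c l / pochK b l * (1 / (b + (l : ℝ))) := by gcongr
        _ = _ := by rw [pochK_succ]; field_simp
    have hs2 : Summable fun l : ℕ => (1 : ℝ) / ((l + 1 : ℕ) : ℝ) := by
      refine Summable.of_nonneg_of_le (fun l => by positivity) (fun l => ?_)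
        (hs.mul_left ((b + 1) / ℓ))
      have h2 : 0 < b + (l : ℝ) := by positivity
      have h3 : (0 : ℝ) ≤ l := l.cast_nonneg
      have e : (b + 1) / ℓ * (ℓ * (1 / (b + (l : ℝ)))) = (b + 1) / (b + l) := by field_simp
      rw [e, div_le_div_iff₀ (by positivity) h2]
      push_cast
      nlinarith
    exact Real.not_summable_one_div_natCast
      ((summable_nat_add_iff (f := fun l : ℕ => (1 : ℝ) / (l : ℝ)) 1).1 hs2)

/-- The evaluation `∑ (c)_l / (b)_{l+1} = 1 / (b - c)`. -/
lemma hasSum_binomial_complex {b c : ℂ} (hcb : ‖c‖ < b.re) :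
    HasSum (fun l : ℕ => poch c l * (1 / poch b (l + 1))) (1 / (b - c)) := by
  obtain ⟨y, hcy, hyb⟩ := exists_between hcb
  have hy : 0 < y := (norm_nonneg c).trans_lt hcy
  have hb : 0 < b.re := hy.trans hyb
  have hs : Summable (fun l : ℕ => poch c l * (1 / poch b (l + 1))) := by
    refine (summable_binomial_real hy hyb).of_norm_bounded fun l => ?_
    rw [norm_mul]
    exact mul_le_mul (norm_poch_le hcy.le l) (norm_inv_poch_le hb le_rfl _) (norm_nonneg _)
      (pochK_pos hy l).le
  have hne : b - c ≠ 0 := by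
    intro h
    rw [sub_eq_zero] at h
    rw [h] at hcb
    exact absurd (Complex.re_le_norm c) (not_le.2 hcb)
  have hlim : Filter.Tendsto (fun l : ℕ => pochK c l / pochK b l) Filter.atTop (nhds 0) := by
    refine squeeze_zero_norm (fun l => ?_) (tendsto_ratio_real hy hyb)
    rw [div_eq_mul_one_div, div_eq_mul_one_div (pochK y l), norm_mul]
    exact mul_le_mul (norm_poch_le hcy.le l) (norm_inv_poch_le hb le_rfl _) (norm_nonneg _)
      (pochK_pos hy l).le
  have h2 : HasSum (fun l : ℕ => (b - c) * (poch c l * (1 / poch b (l + 1)))) 1 := by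
    refine ((hs.mul_left _).hasSum_iff_tendsto_nat).2 ?_
    have e : ∀ l, (b - c) * (poch c l * (1 / poch b (l + 1)))
        = pochK c l / pochK b l - pochK c (l + 1) / pochK b (l + 1) :=
      fun l => binomial_telescope (K := ℂ) (b := b) (by simpa using hb) c l
    simp only [e]
    simp only [Finset.sum_range_sub' (fun l => pochK c l / pochK b l)]
    simpa [pochK] using hlim.const_sub (pochK c 0 / pochK b 0)
  have h3 := h2.mul_left (1 / (b - c))
  rw [mul_one] at h3
  refine h3.congr_fun fun l => ?_
  field_simp

/-! ### The double series -/

lemma summable_outer_real {a c : ℝ} (ha : 0 < a) (hc : 0 < c) (hca : c < a + 1) {n : ℕ}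
    (hn : 0 < n) :
    Summable fun l : ℕ =>
      pochK c l * (1 / ((l + 1 : ℕ) : ℝ) ^ n * (1 / pochK a (l + 1))) := by
  refine Summable.of_nonneg_of_le (fun l => ?_) (fun l => ?_)
    ((summable_binomial_real hc hca).mul_left ((a + 1) / a))
  · have := pochK_pos hc l
    have := pochK_pos ha (l + 1)
    positivity
  · have h1 := pochK_pos hc l
    have h2 := pochK_pos (a := a + 1) (by positivity) l
    have h3 : (0 : ℝ) ≤ l := l.cast_nonneg
    have h4 : 1 / ((l + 1 : ℕ) : ℝ) ^ n ≤ 1 / ((l : ℝ) + 1) := by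
      apply one_div_le_one_div_of_le (by positivity)
      push_cast
      exact le_self_pow₀ (by linarith) hn.ne'
    rw [pochK_succ', pochK_succ]
    have h5 : 1 / ((l : ℝ) + 1) ≤ (a + 1) / (a + 1 + l) := by
      rw [div_le_div_iff₀ (by positivity) (by positivity)]
      nlinarith
    calc pochK c l * (1 / ((l + 1 : ℕ) : ℝ) ^ n * (1 / (a * pochK (a + 1) l)))
        ≤ pochK c l * ((a + 1) / (a + 1 + l) * (1 / (a * pochK (a + 1) l))) := by
          refine mul_le_mul_of_nonneg_left ?_ h1.le
          exact mul_le_mul_of_nonneg_right (h4.trans h5) (by positivity)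
      _ = _ := by field_simp

lemma summable_double_real {a c : ℝ} (ha : 0 < a) (hc : 0 < c) (hca : c < a + 1) {n : ℕ}
    (hn : 0 < n) :
    Summable fun p : ℕ × Tup n => pochK c p.1 * connTerm a (p.1 + 1) p.2 := by
  have hin : ∀ l : ℕ, HasSum (fun t : Tup n => pochK c l * connTerm a (l + 1) t)
      (pochK c l * (1 / ((l + 1 : ℕ) : ℝ) ^ n * (1 / pochK a (l + 1)))) := fun l =>
    (hasSum_connTerm_real (by omega) n ha).mul_left _
  refine (summable_prod_of_nonneg fun p => mul_nonneg (pochK_pos hc p.1).le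
    (connTerm_nonneg ha (p.1 + 1) p.2)).2 ⟨fun l => (hin l).summable, ?_⟩
  exact (summable_outer_real ha hc hca hn).congr fun l => (hin l).tsum_eq.symm

/-- The summand of the double series, as a function of `X`. -/
noncomputable def dblTerm {n : ℕ} (α : ℂ) (p : ℕ × Tup n) (X : ℂ) : ℂ :=
  poch (1 - X) p.1 * connTerm (α - X) (p.1 + 1) p.2

lemma norm_dblTerm_le {n : ℕ} {α : ℂ} (hα : 0 < α.re) (p : ℕ × Tup n) {X : ℂ}
    (hX : X ∈ Metric.ball (0 : ℂ) (α.re / 4)) :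
    ‖dblTerm α p X‖
      ≤ pochK (1 + α.re / 4) p.1 * connTerm (3 * α.re / 4) (p.1 + 1) p.2 := by
  rw [mem_ball_zero_iff] at hX
  have h1 : ‖1 - X‖ ≤ 1 + α.re / 4 := (norm_sub_le _ _).trans (by simpa using hX.le)
  have h2 : 3 * α.re / 4 ≤ (α - X).re := by
    have := Complex.re_le_norm X
    simp only [Complex.sub_re]
    linarith
  rw [dblTerm, norm_mul]
  exact mul_le_mul (norm_poch_le h1 _) (norm_connTerm_le (by positivity) h2 _ _) (norm_nonneg _)
    (pochK_pos (by positivity) _).le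

lemma differentiableOn_dblTerm {n : ℕ} {α : ℂ} (p : ℕ × Tup n) :
    DifferentiableOn ℂ (dblTerm α p) (Metric.ball 0 (α.re / 4)) := by
  intro X hX
  apply DifferentiableAt.differentiableWithinAt
  rw [mem_ball_zero_iff] at hX
  have h2 : 0 < (α - X).re := by
    have := Complex.re_le_norm X
    have := norm_nonneg X
    simp only [Complex.sub_re]
    linarith
  unfold dblTerm connTerm poch
  have hne : pochK (α - X + (topSucc p.2 : ℂ)) (p.1 + 1) ≠ 0 :=
    pochK_ne_zero (by simp at h2 ⊢; positivity) _
  have hne' : ∀ i, (p.2.1 i : ℂ) + (α - X) ≠ 0 := fun i => by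
    rw [add_comm]
    exact natCast_add_ne_zero (by simpa using h2) _
  unfold pochK at hne ⊢
  refine DifferentiableAt.mul (by fun_prop) (DifferentiableAt.mul ?_ ?_)
  · refine DifferentiableAt.fun_finsetProd fun i _ => ?_
    exact (differentiableAt_const _).div (by fun_prop) (hne' i)
  · exact (differentiableAt_const _).div (by fun_prop) hne

/-- The bound of `norm_dblTerm_le`, uniform in `X`, is summable. The radius `Re α / 4` is small
enough that `1 + Re α / 4 < 3 Re α / 4 + 1`, as the binomial-type series requires. -/
lemma summable_dbl_bound {α : ℂ} (hα : 0 < α.re) {n : ℕ} (hn : 0 < n) :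
    Summable fun p : ℕ × Tup n =>
      pochK (1 + α.re / 4) p.1 * connTerm (3 * α.re / 4) (p.1 + 1) p.2 :=
  summable_double_real (by positivity) (by positivity) (by linarith) hn

lemma ball_re_pos {α X : ℂ} (hX : X ∈ Metric.ball (0 : ℂ) (α.re / 4)) : 0 < (α - X).re := by
  rw [mem_ball_zero_iff] at hX
  have := Complex.re_le_norm X
  have := norm_nonneg X
  simp only [Complex.sub_re]
  linarith

lemma tsum_dblTerm_fst {n : ℕ} {α X : ℂ} (hX : X ∈ Metric.ball (0 : ℂ) (α.re / 4)) (l : ℕ) :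
    ∑' t : Tup n, dblTerm α (l, t) X
      = 1 / ((l : ℂ) + 1) ^ n * (poch (1 - X) l / poch (α - X) (l + 1)) := by
  have h := ((hasSum_connTerm_complex (L := l + 1) (by omega) n (ball_re_pos hX)).mul_left
    (poch (1 - X) l)).tsum_eq
  unfold dblTerm
  rw [h]
  change _ * (_ * (1 / poch _ _)) = _
  push_cast
  ring

lemma tsum_dblTerm_snd {n : ℕ} {α X : ℂ} (hX : X ∈ Metric.ball (0 : ℂ) (α.re / 4))
    (t : Tup (n + 1)) :
    ∑' l : ℕ, dblTerm α (l, t) X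
      = (∏ i, 1 / ((t.1 i : ℂ) + α - X)) * (1 / ((t.1 (Fin.last n) : ℂ) + α)) := by
  have hb : ‖1 - X‖ < (α - X + (topSucc t : ℂ)).re := by
    rw [mem_ball_zero_iff] at hX
    have h1 := Complex.re_le_norm X
    have h2 := norm_nonneg X
    have h3 : ‖1 - X‖ ≤ 1 + ‖X‖ := (norm_sub_le _ _).trans (by simp)
    have h4 : (0 : ℝ) ≤ t.1 (Fin.last n) := Nat.cast_nonneg _
    rw [topSucc_succ]
    simp
    linarith
  have h := ((hasSum_binomial_complex hb).mul_left
    (∏ i, 1 / ((t.1 i : ℂ) + (α - X)))).tsum_eq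
  have e : ∀ l, dblTerm α (l, t) X = (∏ i, 1 / ((t.1 i : ℂ) + (α - X)))
      * (poch (1 - X) l * (1 / poch (α - X + (topSucc t : ℂ)) (l + 1))) := by
    intro l
    simp only [dblTerm, connTerm]
    change _ * (_ * (1 / poch _ _)) = _
    ring
  rw [tsum_congr e, h, topSucc_succ]
  push_cast
  congr 1
  · exact Finset.prod_congr rfl fun i _ => by rw [add_sub_assoc]
  · ring_nf

/-- Taylor coefficients of the double series at `X = 0`, computed by summing over `l` first on the
left-hand side and over the tuple `t` first on the right-hand side. -/
lemma tsum_iteratedDeriv_comm {n : ℕ} {α : ℂ} (hα : 0 < α.re) (j : ℕ) :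
    ∑' t : Tup (n + 1), iteratedDeriv j (fun X => (∏ i, 1 / ((t.1 i : ℂ) + α - X))
        * (1 / ((t.1 (Fin.last n) : ℂ) + α))) 0
      = ∑' l : ℕ, (1 / ((l : ℂ) + 1) ^ (n + 1)) * iteratedDeriv j
          (fun X : ℂ => poch (1 - X) l / poch (α - X) (l + 1)) 0 := by
  have hr : 0 < α.re / 4 := by positivity
  have hu := summable_dbl_bound hα (n := n + 1) (by omega)
  have hD := (hasSum_iteratedDeriv_of_bounded j (fun p : ℕ × Tup (n + 1) => dblTerm α p) _ _ hr hu
    (fun p => differentiableOn_dblTerm p) (fun p w hw => norm_dblTerm_le hα p hw)).summable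
  have hl : ∀ l : ℕ, ∑' t : Tup (n + 1), iteratedDeriv j (dblTerm α (l, t)) 0
      = (1 / ((l : ℂ) + 1) ^ (n + 1)) * iteratedDeriv j
          (fun X : ℂ => poch (1 - X) l / poch (α - X) (l + 1)) 0 := by
    intro l
    rw [(hasSum_iteratedDeriv_of_bounded j (fun t : Tup (n + 1) => dblTerm α (l, t)) _ _ hr
      (hu.prod_factor l) (fun t => differentiableOn_dblTerm _)
      (fun t w hw => norm_dblTerm_le hα _ hw)).tsum_eq, ← iteratedDeriv_const_mul_field]
    apply Filter.EventuallyEq.iteratedDeriv_eq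
    filter_upwards [Metric.ball_mem_nhds (0 : ℂ) hr] with X hX
    exact tsum_dblTerm_fst hX l
  have ht : ∀ t : Tup (n + 1), ∑' l : ℕ, iteratedDeriv j (dblTerm α (l, t)) 0
      = iteratedDeriv j (fun X => (∏ i, 1 / ((t.1 i : ℂ) + α - X))
        * (1 / ((t.1 (Fin.last n) : ℂ) + α))) 0 := by
    intro t
    rw [(hasSum_iteratedDeriv_of_bounded j (fun l : ℕ => dblTerm α (l, t)) _ _ hr
      (hu.prod_symm.prod_factor t) (fun t => differentiableOn_dblTerm _)
      (fun l w hw => norm_dblTerm_le hα _ hw)).tsum_eq]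
    apply Filter.EventuallyEq.iteratedDeriv_eq
    filter_upwards [Metric.ball_mem_nhds (0 : ℂ) hr] with X hX
    exact tsum_dblTerm_snd hX t
  rw [← tsum_congr hl, ← tsum_congr ht]
  exact hD.tsum_comm

/-! ### The weights -/

/-- Adding the minimal exponent `(1, …, 1, 2)` identifies the `(n + 1)`-tuples of natural numbers
of sum `j` with the admissible exponents `κ` of weight `k = n + 2 + j`. -/
noncomputable def expEquiv (n j : ℕ) (k : ℕ) (hk : k = n + 1 + 1 + j) :
    (Finset.finsuppAntidiag (Finset.univ : Finset (Fin (n + 1))) j) ≃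
      {κ : Fin (n + 1) → ℕ // (∀ i, 1 ≤ κ i) ∧ 2 ≤ κ (Fin.last n) ∧ ∑ i, κ i = k} where
  toFun p := ⟨fun i => p.1 i + 1 + if i = Fin.last n then 1 else 0, by
    have hp : ∑ i, p.1 i = j := (Finset.mem_finsuppAntidiag.1 p.2).1
    refine ⟨fun i => by simp only; omega, by simp, ?_⟩
    simp only [Finset.sum_add_distrib, Finset.sum_ite_eq', Finset.mem_univ, if_true,
      Finset.sum_const, Finset.card_univ, Fintype.card_fin, smul_eq_mul, mul_one]
    omega⟩
  invFun κ := ⟨Finsupp.equivFunOnFinite.symm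
      fun i => κ.1 i - 1 - if i = Fin.last n then 1 else 0, by
    rw [Finset.mem_finsuppAntidiag]
    refine ⟨?_, Finset.subset_univ _⟩
    obtain ⟨κ, h1, h2, h3⟩ := κ
    have e : ∀ i, κ i = (κ i - 1 - if i = Fin.last n then 1 else 0) + 1
        + if i = Fin.last n then 1 else 0 := by
      intro i
      have := h1 i
      split_ifs with h
      · subst h; omega
      · omega
    rw [Finset.sum_congr rfl fun i _ => e i] at h3
    simp only [Finset.sum_add_distrib, Finset.sum_ite_eq', Finset.mem_univ, if_true,
      Finset.sum_const, Finset.card_univ, Fintype.card_fin, smul_eq_mul, mul_one] at h3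
    simp only [Finsupp.equivFunOnFinite_symm_apply_apply]
    omega⟩
  left_inv p := by
    ext i
    simp only [Finsupp.equivFunOnFinite_symm_apply_apply]
    omega
  right_inv κ := by
    obtain ⟨κ, h1, h2, h3⟩ := κ
    ext i
    have := h1 i
    simp only [Finsupp.equivFunOnFinite_symm_apply_apply]
    split_ifs with h
    · subst h; omega
    · omega

lemma prod_shift_exponent {n : ℕ} (x : Fin (n + 1) → ℂ) (p : Fin (n + 1) → ℕ) :
    ∏ i, 1 / x i ^ (p i + 1 + if i = Fin.last n then 1 else 0)
      = (∏ i, 1 / x i ^ (p i + 1)) * (1 / x (Fin.last n)) := by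
  have : ∀ i, 1 / x i ^ (p i + 1 + if i = Fin.last n then 1 else 0)
      = 1 / x i ^ (p i + 1) * (if i = Fin.last n then 1 / x i else 1) := by
    intro i
    split_ifs
    · rw [pow_succ _ (p i + 1), one_div_mul_one_div]
    · simp
  simp only [this, Finset.prod_mul_distrib, Finset.prod_ite_eq', Finset.mem_univ, if_true]

lemma summable_mhzeta_term {n : ℕ} {α : ℂ} (hα : 0 < α.re) (p : Fin (n + 1) → ℕ) :
    Summable fun t : Tup (n + 1) =>
      (∏ i, 1 / ((t.1 i : ℂ) + α) ^ (p i + 1)) * (1 / ((t.1 (Fin.last n) : ℂ) + α)) := by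
  have hr : 0 < α.re / 4 := by positivity
  have h0 : (0 : ℂ) ∈ Metric.ball (0 : ℂ) (α.re / 4) := Metric.mem_ball_self hr
  have hd : Summable fun q : Tup (n + 1) × ℕ => dblTerm α q.swap 0 :=
    ((summable_dbl_bound hα (n := n + 1) (by omega)).of_norm_bounded
      fun p => norm_dblTerm_le hα p h0).prod_symm
  have hb := hd.prod
  simp only [Prod.swap_prod_mk, tsum_dblTerm_snd h0, sub_zero] at hb
  refine (hb.norm.mul_left (∏ i, 1 / α.re ^ p i)).of_norm_bounded fun t => ?_
  have e : (∏ i, 1 / ((t.1 i : ℂ) + α) ^ (p i + 1)) * (1 / ((t.1 (Fin.last n) : ℂ) + α))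
      = (∏ i, 1 / ((t.1 i : ℂ) + α) ^ p i) * ((∏ i, 1 / ((t.1 i : ℂ) + α))
        * (1 / ((t.1 (Fin.last n) : ℂ) + α))) := by
    rw [← mul_assoc, ← Finset.prod_mul_distrib]
    congr 1
    exact Finset.prod_congr rfl fun i _ => by rw [pow_succ, one_div_mul_one_div]
  rw [e, norm_mul, norm_prod]
  refine mul_le_mul_of_nonneg_right ?_ (norm_nonneg _)
  refine Finset.prod_le_prod (fun _ _ => norm_nonneg _) fun i _ => ?_
  rw [norm_div, norm_one, norm_pow]
  apply one_div_le_one_div_of_le (by positivity)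
  have h1 := le_norm_add_natCast (z := α) le_rfl (t.1 i)
  have h2 : (0 : ℝ) ≤ t.1 i := Nat.cast_nonneg _
  rw [add_comm _ α]
  gcongr
  linarith

/-- Proposition 3: for integers `0 < n < k` and `α ∈ ℂ` with `Re α > 0`,
`∑_{k₁+⋯+kₙ=k, kᵢ≥1, kₙ≥2} ζ(k₁,…,kₙ;α)` equals
`(1/(k-n-1)!) ∑_{l≥0} (1/(l+1)^n) ∂^{k-n-1}/∂X^{k-n-1} [ (1-X)_l/(α-X)_{l+1} ]|_{X=0}`. -/
theorem stmt_2 (k n : ℕ) (hn : 0 < n) (hk : n < k) (α : ℂ) (hα : 0 < α.re) :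
    ∑' κ : {κ : Fin n → ℕ //
          (∀ i, 1 ≤ κ i) ∧ 2 ≤ κ ⟨n - 1, by omega⟩ ∧ ∑ i, κ i = k},
        mhzeta κ.1 α
      = (1 / (Nat.factorial (k - n - 1) : ℂ))
          * ∑' l : ℕ, (1 / ((l : ℂ) + 1) ^ n)
              * iteratedDeriv (k - n - 1)
                  (fun X : ℂ => poch (1 - X) l / poch (α - X) (l + 1)) 0 := by
  obtain ⟨n, rfl⟩ : ∃ N, n = N + 1 := ⟨n - 1, by omega⟩
  obtain ⟨j, rfl⟩ : ∃ j, k = n + 1 + 1 + j := ⟨k - (n + 1 + 1), by omega⟩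
  have hj : n + 1 + 1 + j - (n + 1) - 1 = j := by omega
  have hx : ∀ m : ℕ, (m : ℂ) + α ≠ 0 := fun m => by
    rw [add_comm]
    exact natCast_add_ne_zero (by simpa using hα) m
  rw [hj, ← tsum_iteratedDeriv_comm hα j, ← tsum_mul_left]
  have hL := (expEquiv n j _ rfl).tsum_eq (fun κ => mhzeta κ.1 α)
  refine hL.symm.trans ?_
  rw [tsum_fintype]
  simp only [mhzeta, expEquiv, Equiv.coe_fn_mk]
  rw [Finset.sum_coe_sort (Finset.finsuppAntidiag Finset.univ j) (fun p => ∑' t : Tup (n + 1),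
    ∏ i, 1 / ((t.1 i : ℂ) + α) ^ (p i + 1 + if i = Fin.last n then 1 else 0))]
  have hsh : ∀ (t : Tup (n + 1)) (p : Fin (n + 1) →₀ ℕ),
      ∏ i, 1 / ((t.1 i : ℂ) + α) ^ (p i + 1 + if i = Fin.last n then 1 else 0)
        = (∏ i, 1 / ((t.1 i : ℂ) + α) ^ (p i + 1)) * (1 / ((t.1 (Fin.last n) : ℂ) + α)) :=
    fun t p => prod_shift_exponent (fun i => (t.1 i : ℂ) + α) p
  simp only [hsh]
  rw [← Summable.tsum_finsetSum fun (p : Fin (n + 1) →₀ ℕ) _ => summable_mhzeta_term hα p]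
  refine tsum_congr fun t => ?_
  rw [← Finset.sum_mul, ← iteratedDeriv_prod_inv (fun i => (t.1 i : ℂ) + α) (fun i => hx _) j]
  rw [iteratedDeriv_mul_const_field]
  ring
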